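/- Proposition 1: The length of the minimum construction tree of the isosceles trapezium, namely 2·dist(A₁',F₁₂) + 2·dist(A₃,F₃₄) + 2·sin(θ/2)·dist(F₁₂,F₃₄), equals 2·(a12 + a34)·cos(θ/2). -/

import Mathlib

open Real EuclideanGeometry

noncomputable def pt (x y : ℝ) : EuclideanSpace ℝ (Fin 2) :=
  (WithLp.equiv 2 (Fin 2 → ℝ)).symm ![x, y]

/-!
If the four edges at the vertices have slope `± tan φ` and the edge between the two nodes has
weight `2 sin φ`, then the tree has length `(a + b) cos φ + 2 d sin φ`. The angle `φ = θ / 2`, for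
which `tan φ = (a + b) / (2 d)`, is the one at which these two summands are equal.
-/

lemma dist_pt (x y u v : ℝ) : dist (pt x y) (pt u v) = √((x - u) ^ 2 + (y - v) ^ 2) := by
  simp [pt, EuclideanSpace.dist_eq, Real.dist_eq, sq_abs]

lemma dist_pt_same_fst (x y v : ℝ) : dist (pt x y) (pt x v) = |y - v| := by
  rw [dist_pt, sub_self, zero_pow two_ne_zero, zero_add, sqrt_sq_eq_abs]

lemma dist_pt_of_slope_eq_tan {x y u v φ : ℝ} (hφ : 0 < cos φ)
    (hslope : y - v = (x - u) * tan φ) : dist (pt x y) (pt u v) = |x - u| / cos φ := by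
  calc dist (pt x y) (pt u v)
      = √((x - u) ^ 2 * (1 + tan φ ^ 2)) := by rw [dist_pt, hslope]; ring_nf
    _ = |x - u| * √(1 + tan φ ^ 2) := by rw [sqrt_mul (sq_nonneg _), sqrt_sq_eq_abs]
    _ = |x - u| / cos φ := by rw [← inv_sqrt_one_add_tan_sq hφ, div_inv_eq_mul]

/-- The weighted length of the construction tree of the isosceles trapezium with parallel sides
`a` (top) and `b` (bottom) at distance `d`. Each vertex is joined to the node of its parallel side
by an edge making the angle `φ` with that side, and the edge between the two nodes, which lie on
the axis of symmetry, has weight `2 sin φ`. The two edges at a node have the same length, so only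
one of them is measured. -/
noncomputable def constructionTreeLength (a b d φ : ℝ) : ℝ :=
  2 * dist (pt (-(a / 2)) d) (pt 0 (d - a / 2 * tan φ)) +
    2 * dist (pt (b / 2) 0) (pt 0 (b / 2 * tan φ)) +
    2 * sin φ * dist (pt 0 (d - a / 2 * tan φ)) (pt 0 (b / 2 * tan φ))

lemma constructionTreeLength_eq {a b d φ : ℝ} (ha : 0 ≤ a) (hb : 0 ≤ b) (hφ : 0 < cos φ)
    (hnodes : (a + b) / 2 * tan φ ≤ d) :
    constructionTreeLength a b d φ = (a + b) * cos φ + 2 * d * sin φ := by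
  have top_edge : dist (pt (-(a / 2)) d) (pt 0 (d - a / 2 * tan φ)) = a / 2 / cos φ := by
    rw [dist_pt_of_slope_eq_tan (φ := -φ) (by rwa [cos_neg]) (by rw [tan_neg]; ring), cos_neg,
      sub_zero, abs_neg, abs_of_nonneg (by positivity)]
  have bottom_edge : dist (pt (b / 2) 0) (pt 0 (b / 2 * tan φ)) = b / 2 / cos φ := by
    rw [dist_pt_of_slope_eq_tan (φ := -φ) (by rwa [cos_neg]) (by rw [tan_neg]; ring), cos_neg,
      sub_zero, abs_of_nonneg (by positivity)]
  have middle_edge : dist (pt 0 (d - a / 2 * tan φ)) (pt 0 (b / 2 * tan φ)) =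
      d - (a + b) / 2 * tan φ := by
    rw [dist_pt_same_fst, abs_of_nonneg (by linarith)]
    ring
  rw [constructionTreeLength, top_edge, bottom_edge, middle_edge, tan_eq_sin_div_cos]
  field_simp
  linear_combination -(a + b) * sin_sq_add_cos_sq φ

theorem stmt_1_general {a12 a34 d θ : ℝ} (ha12 : 0 ≤ a12) (ha34 : 0 ≤ a34) (hd : 0 < d)
    (hmean : a12 + a34 ≤ 2 * d) (hθ : θ = 2 * arctan ((a12 + a34) / (2 * d))) :
    constructionTreeLength a12 a34 d (θ / 2) = 2 * (a12 + a34) * cos (θ / 2) := by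
  have half_angle : θ / 2 = arctan ((a12 + a34) / (2 * d)) := by rw [hθ]; ring
  have cos_pos : 0 < cos (θ / 2) := half_angle ▸ cos_arctan_pos _
  have tan_half : tan (θ / 2) = (a12 + a34) / (2 * d) := by rw [half_angle, tan_arctan]
  have tan_le_one : tan (θ / 2) ≤ 1 := tan_half ▸ div_le_one_of_le₀ hmean (by positivity)
  have hnodes : (a12 + a34) / 2 * tan (θ / 2) ≤ d :=
    (mul_le_of_le_one_right (by positivity) tan_le_one).trans (by linarith)
  have balance : 2 * d * sin (θ / 2) = (a12 + a34) * cos (θ / 2) := by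
    rw [← tan_mul_cos cos_pos.ne', tan_half]
    field_simp
  rw [constructionTreeLength_eq ha12 ha34 cos_pos hnodes, balance]
  ring

theorem stmt_1 (a12 a34 d θ : ℝ) (ha12 : 0 < a12) (ha34 : 0 < a34)
    (hd : max a12 a34 < d)
    (hθ : θ = 2 * Real.arctan ((a12 + a34) / (2 * d)))
    (A₁' A₂' A₃ A₄ F₁₂ F₃₄ : EuclideanSpace ℝ (Fin 2))
    (hA₁ : A₁' = pt (-(a12 / 2)) d) (hA₂ : A₂' = pt (a12 / 2) d)
    (hA₃ : A₃ = pt (a34 / 2) 0) (hA₄ : A₄ = pt (-(a34 / 2)) 0)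
    (hF₁₂ : F₁₂ = pt 0 (d - a12 / 2 * Real.tan (θ / 2)))
    (hF₃₄ : F₃₄ = pt 0 (a34 / 2 * Real.tan (θ / 2))) :
    2 * dist A₁' F₁₂ + 2 * dist A₃ F₃₄ +
      2 * Real.sin (θ / 2) * dist F₁₂ F₃₄ =
    2 * (a12 + a34) * Real.cos (θ / 2) := by
  obtain ⟨h12, h34⟩ := max_lt_iff.mp hd
  rw [hA₁, hA₃, hF₁₂, hF₃₄]
  exact stmt_1_general ha12.le ha34.le (ha12.trans h12) (by linarith) hθ
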